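/- Let 1 < p < q < γ, let Ω ⊂ ℝ^N be a bounded domain, a, b ∈ L^∞(Ω) with a ≥ 0, a ≢ 0, b ≥ σ_b > 0 a.e., and γ < p*. Define, for u ∈ W_0^{1,p}(Ω) with ∫a|u|^q > 0, the quotient Υ(u) = (∫a|u|^q)^{(γ-p)/(γ-q)} / (∫|∇u|^p · (∫b|u|^γ)^{(q-p)/(γ-q)}). Then 0 < sup Υ < ∞ over the admissible set. -/

import Mathlib

open MeasureTheory

/-!
Hölder's inequality interpolates `∫ |u|^q` between `∫ |u|^p` and `∫ |u|^γ`; after inserting the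
bounds on the weights this reads
`(∫ a|u|^q)^{(γ-p)/(γ-q)} ≤ C ∫ |u|^p (∫ b|u|^γ)^{(q-p)/(γ-q)}`, and Poincaré's inequality replaces
`∫ |u|^p` by `∫ ‖Du‖^p`. If `Ω` lies in the slab `|f| ≤ R` of a linear form `f` and `f e = 1`, then
`∫ |u|^p = -∫ f ∂ₑ(|u|^p)`, and Hölder's inequality allows the resulting factor
`(∫ |u|^p)^{1-1/p}` to be absorbed on the left, which is Poincaré's inequality.

For positivity, `a ≠ 0` gives a test function `u` with `∫ a u ≠ 0`, so that `∫ a|u|^q > 0`, and the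
upper bound itself then shows that the denominator of the quotient at `u` is positive.
-/

section MeasureSpace

variable {α : Type*} [MeasurableSpace α] {μ : Measure α}

lemma integrable_rpow_mul_rpow {f g : α → ℝ} (hf₀ : 0 ≤ f) (hg₀ : 0 ≤ g) (hf : Integrable f μ)
    (hg : Integrable g μ) {θ τ : ℝ} (hθ : 0 ≤ θ) (hτ : 0 ≤ τ) (hθτ : θ + τ = 1) :
    Integrable (fun x ↦ f x ^ θ * g x ^ τ) μ := by
  refine ((hf.const_mul θ).add (hg.const_mul τ)).mono'
    ((hf.aemeasurable.pow_const θ).mul (hg.aemeasurable.pow_const τ)).aestronglyMeasurable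
    (.of_forall fun x ↦ ?_)
  have hfx : 0 ≤ f x := hf₀ x
  have hgx : 0 ≤ g x := hg₀ x
  rw [Real.norm_of_nonneg (by positivity)]
  exact Real.geom_mean_le_arith_mean2_weighted hθ hτ hfx hgx hθτ

lemma integral_rpow_mul_rpow_le {f g : α → ℝ} (hf₀ : 0 ≤ f) (hg₀ : 0 ≤ g) (hf : Integrable f μ)
    (hg : Integrable g μ) {θ τ : ℝ} (hθ : 0 ≤ θ) (hτ : 0 ≤ τ) (hθτ : θ + τ = 1) :
    ∫ x, f x ^ θ * g x ^ τ ∂μ ≤ (∫ x, f x ∂μ) ^ θ * (∫ x, g x ∂μ) ^ τ := by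
  have hfg₀ (x : α) : 0 ≤ f x ^ θ * g x ^ τ :=
    mul_nonneg (Real.rpow_nonneg (hf₀ x) θ) (Real.rpow_nonneg (hg₀ x) τ)
  have hF : 0 ≤ ∫ x, f x ∂μ := integral_nonneg hf₀
  have hG : 0 ≤ ∫ x, g x ∂μ := integral_nonneg hg₀
  rw [← ENNReal.ofReal_le_ofReal_iff (by positivity), ENNReal.ofReal_mul (by positivity),
    ← ENNReal.ofReal_rpow_of_nonneg hF hθ, ← ENNReal.ofReal_rpow_of_nonneg hG hτ,
    ofReal_integral_eq_lintegral_ofReal hf (.of_forall hf₀),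
    ofReal_integral_eq_lintegral_ofReal hg (.of_forall hg₀),
    ofReal_integral_eq_lintegral_ofReal
      (integrable_rpow_mul_rpow hf₀ hg₀ hf hg hθ hτ hθτ) (.of_forall hfg₀)]
  calc ∫⁻ x, ENNReal.ofReal (f x ^ θ * g x ^ τ) ∂μ
      = ∫⁻ x, ENNReal.ofReal (f x) ^ θ * ENNReal.ofReal (g x) ^ τ ∂μ := by
        refine lintegral_congr fun x ↦ ?_
        rw [ENNReal.ofReal_mul (Real.rpow_nonneg (hf₀ x) θ),
          ENNReal.ofReal_rpow_of_nonneg (hf₀ x) hθ, ENNReal.ofReal_rpow_of_nonneg (hg₀ x) hτ]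
    _ ≤ _ := ENNReal.lintegral_mul_norm_pow_le hf.aemeasurable.ennreal_ofReal
        hg.aemeasurable.ennreal_ofReal hθ hτ hθτ

lemma rpow_eq_rpow_rpow_mul_rpow_rpow {p q γ : ℝ} (hp : 0 < p) (hpq : p ≤ q) (hqγ : q ≤ γ)
    (hpγ : p < γ) {y : ℝ} (hy : 0 ≤ y) :
    y ^ q = (y ^ p) ^ ((γ - q) / (γ - p)) * (y ^ γ) ^ ((q - p) / (γ - p)) := by
  have hpγ' : 0 < γ - p := sub_pos.2 hpγ
  have : 0 ≤ (γ - q) / (γ - p) := div_nonneg (sub_nonneg.2 hqγ) hpγ'.le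
  have : 0 ≤ (q - p) / (γ - p) := div_nonneg (sub_nonneg.2 hpq) hpγ'.le
  have hγ : 0 < γ := hp.trans hpγ
  rw [← Real.rpow_mul hy, ← Real.rpow_mul hy,
    ← Real.rpow_add_of_nonneg hy (by positivity) (by positivity)]
  congr 1
  field_simp
  ring

section Interpolation

variable {p q γ : ℝ} {v : α → ℝ}

lemma sub_div_sub_add_sub_div_sub (hpγ : p < γ) :
    (γ - q) / (γ - p) + (q - p) / (γ - p) = 1 := by
  rw [← add_div, sub_add_sub_cancel, div_self (sub_pos.2 hpγ).ne']

lemma integrable_rpow_of_le_of_le (hp : 0 < p) (hpq : p ≤ q) (hqγ : q ≤ γ) (hpγ : p < γ)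
    (hv : 0 ≤ v) (hvp : Integrable (fun x ↦ v x ^ p) μ) (hvγ : Integrable (fun x ↦ v x ^ γ) μ) :
    Integrable (fun x ↦ v x ^ q) μ := by
  simp only [rpow_eq_rpow_rpow_mul_rpow_rpow hp hpq hqγ hpγ (hv _)]
  exact integrable_rpow_mul_rpow (fun x ↦ Real.rpow_nonneg (hv x) p)
    (fun x ↦ Real.rpow_nonneg (hv x) γ) hvp hvγ
    (div_nonneg (sub_nonneg.2 hqγ) (sub_pos.2 hpγ).le)
    (div_nonneg (sub_nonneg.2 hpq) (sub_pos.2 hpγ).le) (sub_div_sub_add_sub_div_sub hpγ)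

lemma integral_rpow_le_integral_rpow_mul_integral_rpow (hp : 0 < p) (hpq : p ≤ q) (hqγ : q ≤ γ)
    (hpγ : p < γ) (hv : 0 ≤ v) (hvp : Integrable (fun x ↦ v x ^ p) μ)
    (hvγ : Integrable (fun x ↦ v x ^ γ) μ) :
    ∫ x, v x ^ q ∂μ ≤
      (∫ x, v x ^ p ∂μ) ^ ((γ - q) / (γ - p)) * (∫ x, v x ^ γ ∂μ) ^ ((q - p) / (γ - p)) := by
  simp only [rpow_eq_rpow_rpow_mul_rpow_rpow hp hpq hqγ hpγ (hv _)]
  exact integral_rpow_mul_rpow_le (fun x ↦ Real.rpow_nonneg (hv x) p)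
    (fun x ↦ Real.rpow_nonneg (hv x) γ) hvp hvγ
    (div_nonneg (sub_nonneg.2 hqγ) (sub_pos.2 hpγ).le)
    (div_nonneg (sub_nonneg.2 hpq) (sub_pos.2 hpγ).le) (sub_div_sub_add_sub_div_sub hpγ)

end Interpolation

lemma ae_nonneg_mul_rpow {w v : α → ℝ} (hw : ∀ᵐ x ∂μ, 0 ≤ w x) (hv : 0 ≤ v) (r : ℝ) :
    0 ≤ᵐ[μ] fun x ↦ w x * v x ^ r := by
  filter_upwards [hw] with x hx using mul_nonneg hx (Real.rpow_nonneg (hv x) r)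

lemma integral_mul_le_mul_integral_of_ae_le {w g : α → ℝ} {A : ℝ}
    (hw : ∀ᵐ x ∂μ, 0 ≤ w x ∧ w x ≤ A) (hg₀ : 0 ≤ g) (hg : Integrable g μ) :
    ∫ x, w x * g x ∂μ ≤ A * ∫ x, g x ∂μ := by
  rw [← integral_const_mul]
  refine integral_mono_of_nonneg ?_ (hg.const_mul A) ?_
  · filter_upwards [hw] with x hx using mul_nonneg hx.1 (hg₀ x)
  · filter_upwards [hw] with x hx using mul_le_mul_of_nonneg_right hx.2 (hg₀ x)

lemma mul_integral_le_integral_mul_of_ae_le {w g : α → ℝ} {σ : ℝ} (hw : ∀ᵐ x ∂μ, σ ≤ w x)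
    (hg₀ : 0 ≤ g) (hg : Integrable g μ) (hwg : Integrable (fun x ↦ w x * g x) μ) :
    σ * ∫ x, g x ∂μ ≤ ∫ x, w x * g x ∂μ := by
  rw [← integral_const_mul]
  refine integral_mono_ae (hg.const_mul σ) hwg ?_
  filter_upwards [hw] with x hx using mul_le_mul_of_nonneg_right hx (hg₀ x)

lemma rpow_integral_mul_rpow_le_of_ae_le {p q γ A σ : ℝ} (hp : 0 < p) (hpq : p ≤ q) (hqγ : q < γ)
    (hσ : 0 < σ) {a b v : α → ℝ} (ha : ∀ᵐ x ∂μ, 0 ≤ a x ∧ a x ≤ A) (hb : ∀ᵐ x ∂μ, σ ≤ b x)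
    (hv : 0 ≤ v) (hvp : Integrable (fun x ↦ v x ^ p) μ) (hvγ : Integrable (fun x ↦ v x ^ γ) μ)
    (hbv : Integrable (fun x ↦ b x * v x ^ γ) μ) :
    (∫ x, a x * v x ^ q ∂μ) ^ ((γ - p) / (γ - q)) ≤
      |A| ^ ((γ - p) / (γ - q)) * (σ⁻¹) ^ ((q - p) / (γ - q)) *
        ((∫ x, v x ^ p ∂μ) * (∫ x, b x * v x ^ γ ∂μ) ^ ((q - p) / (γ - q))) := by
  have hpγ : p < γ := hpq.trans_lt hqγ
  have hγq₀ : 0 < γ - q := sub_pos.2 hqγ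
  have hγp₀ : 0 < γ - p := sub_pos.2 hpγ
  have : 0 ≤ q - p := sub_nonneg.2 hpq
  have hvr (r : ℝ) : 0 ≤ fun x ↦ v x ^ r := fun x ↦ Real.rpow_nonneg (hv x) r
  have hI (r : ℝ) : 0 ≤ ∫ x, v x ^ r ∂μ := integral_nonneg (hvr r)
  have hweight_a : ∫ x, a x * v x ^ q ∂μ ≤ |A| * ∫ x, v x ^ q ∂μ :=
    integral_mul_le_mul_integral_of_ae_le
      (ha.mono fun _ hx ↦ ⟨hx.1, hx.2.trans (le_abs_self A)⟩) (hvr q)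
      (integrable_rpow_of_le_of_le hp hpq hqγ.le hpγ hv hvp hvγ)
  have hweight_b : ∫ x, v x ^ γ ∂μ ≤ σ⁻¹ * ∫ x, b x * v x ^ γ ∂μ :=
    (le_inv_mul_iff₀ hσ).2 (mul_integral_le_integral_mul_of_ae_le hb (hvr γ) hvγ hbv)
  have ha_nonneg : 0 ≤ ∫ x, a x * v x ^ q ∂μ :=
    integral_nonneg_of_ae (ae_nonneg_mul_rpow (ha.mono fun _ hx ↦ hx.1) hv q)
  have hb_nonneg : 0 ≤ ∫ x, b x * v x ^ γ ∂μ :=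
    integral_nonneg_of_ae (ae_nonneg_mul_rpow (hb.mono fun _ hx ↦ hσ.le.trans hx) hv γ)
  calc (∫ x, a x * v x ^ q ∂μ) ^ ((γ - p) / (γ - q))
      ≤ (|A| * ((∫ x, v x ^ p ∂μ) ^ ((γ - q) / (γ - p)) *
          (σ⁻¹ * ∫ x, b x * v x ^ γ ∂μ) ^ ((q - p) / (γ - p)))) ^ ((γ - p) / (γ - q)) := by
        have := hI p
        have := hI γ
        refine Real.rpow_le_rpow ha_nonneg (hweight_a.trans ?_) (by positivity)
        gcongr
        refine (integral_rpow_le_integral_rpow_mul_integral_rpow hp hpq hqγ.le hpγ hv hvp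
          hvγ).trans ?_
        gcongr
    _ = _ := by
        have := hI p
        have hcancel : (γ - q) / (γ - p) * ((γ - p) / (γ - q)) = 1 := by field_simp
        have hcancel' : (q - p) / (γ - p) * ((γ - p) / (γ - q)) = (q - p) / (γ - q) := by
          field_simp
        rw [Real.mul_rpow (by positivity) (by positivity), Real.mul_rpow (by positivity)
          (by positivity), ← Real.rpow_mul (hI p), ← Real.rpow_mul (by positivity), hcancel,
          hcancel', Real.rpow_one, Real.mul_rpow (by positivity) hb_nonneg]
        ring

end MeasureSpace

lemma le_rpow_mul_of_le_mul_rpow_mul_rpow {P G C p : ℝ} (hp : 0 < p) (hP : 0 ≤ P) (hG : 0 ≤ G)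
    (hC : 0 ≤ C) (h : P ≤ C * (P ^ (1 - p⁻¹) * G ^ p⁻¹)) : P ≤ C ^ p * G := by
  rcases hP.eq_or_lt with rfl | hP₀
  · positivity
  have hsplit : P ^ (1 - p⁻¹) * P ^ p⁻¹ = P := by
    rw [← Real.rpow_add hP₀, sub_add_cancel, Real.rpow_one]
  have hroot : P ^ p⁻¹ ≤ C * G ^ p⁻¹ := by
    refine le_of_mul_le_mul_left ?_ (Real.rpow_pos_of_pos hP₀ (1 - p⁻¹))
    rw [hsplit]
    exact h.trans_eq (by ring)
  calc P = (P ^ p⁻¹) ^ p := (Real.rpow_inv_rpow hP hp.ne').symm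
    _ ≤ (C * G ^ p⁻¹) ^ p := by gcongr
    _ = C ^ p * G := by
      rw [Real.mul_rpow hC (by positivity), Real.rpow_inv_rpow hG hp.ne']

section CompactSupport

variable {X F : Type*} [TopologicalSpace X] [MeasurableSpace X] [OpensMeasurableSpace X]
  {μ : Measure X} [NormedAddCommGroup F]

lemma integrable_norm_rpow_of_hasCompactSupport [IsFiniteMeasureOnCompacts μ] {g : X → F}
    (hg : Continuous g) (hc : HasCompactSupport g) {r : ℝ} (hr : 0 < r) :
    Integrable (fun x ↦ ‖g x‖ ^ r) μ :=
  (hg.norm.rpow_const fun _ ↦ .inr hr.le).integrable_of_hasCompactSupport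
    (hc.comp_left (g := fun y : F ↦ ‖y‖ ^ r) (by simp [hr.ne']))

lemma integrableOn_mul_norm_rpow_of_tsupport_subset [T2Space X] {Ω : Set X} {w : X → ℝ}
    (hw : LocallyIntegrableOn w Ω μ) {g : X → F} (hg : Continuous g) (hc : HasCompactSupport g)
    (hsupp : tsupport g ⊆ Ω) {r : ℝ} (hr : 0 < r) :
    IntegrableOn (fun x ↦ w x * ‖g x‖ ^ r) Ω μ := by
  have hcompact : IntegrableOn (fun x ↦ w x * ‖g x‖ ^ r) (tsupport g) μ :=
    (hw.integrableOn_compact_subset hsupp hc).mul_continuousOn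
      (hg.norm.rpow_const fun _ ↦ .inr hr.le).continuousOn hc
  have hzero (x : X) (hx : x ∉ tsupport g) : w x * ‖g x‖ ^ r = 0 := by
    simp [image_eq_zero_of_notMem_tsupport hx, hr.ne']
  exact (hcompact.integrable_of_forall_notMem_eq_zero hzero).integrableOn

end CompactSupport

section Poincare

variable {E F : Type*} [NormedAddCommGroup E] [NormedSpace ℝ E] [NormedAddCommGroup F]
  [InnerProductSpace ℝ F] {u : E → F} {p : ℝ}

lemma abs_fderiv_norm_rpow_apply_le (hu : Differentiable ℝ u) (hp : 1 < p) (x e : E) :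
    |fderiv ℝ (fun y ↦ ‖u y‖ ^ p) x e| ≤ p * (‖u x‖ ^ (p - 1) * ‖fderiv ℝ u x e‖) := by
  have hpow : ‖u x‖ ^ (p - 1) = ‖u x‖ ^ (p - 2) * ‖u x‖ := by
    rw [← Real.rpow_add_one' (norm_nonneg _) (by linarith)]
    ring_nf
  rw [hu.fderiv_norm_rpow hp, smul_apply, ContinuousLinearMap.comp_apply,
    innerSL_apply_apply, smul_eq_mul, abs_mul, abs_of_nonneg (by positivity), hpow, mul_assoc,
    mul_assoc]
  gcongr
  exact abs_real_inner_le_norm _ _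

variable [FiniteDimensional ℝ E] [MeasurableSpace E] [BorelSpace E] {μ : Measure E}
  [μ.IsAddHaarMeasure]

lemma integral_norm_rpow_eq_neg_integral_mul_fderiv (hu : ContDiff ℝ 1 u)
    (hc : HasCompactSupport u) (hp : 1 < p) {f : E →L[ℝ] ℝ} {e : E} (hfe : f e = 1) :
    ∫ x, ‖u x‖ ^ p ∂μ = -∫ x, f x * fderiv ℝ (fun y ↦ ‖u y‖ ^ p) x e ∂μ := by
  have hg : ContDiff ℝ 1 fun x ↦ ‖u x‖ ^ p := hu.norm_rpow hp
  have hgc : HasCompactSupport fun x ↦ ‖u x‖ ^ p :=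
    hc.comp_left (g := fun y : F ↦ ‖y‖ ^ p) (by simp [(one_pos.trans hp).ne'])
  have hg' : Continuous fun x ↦ fderiv ℝ (fun y ↦ ‖u y‖ ^ p) x e :=
    (hg.continuous_fderiv one_ne_zero).clm_apply continuous_const
  have hparts := integral_mul_fderiv_eq_neg_fderiv_mul_of_integrable (μ := μ) (f := f) (v := e)
    (by simpa [hfe] using hg.continuous.integrable_of_hasCompactSupport hgc)
    ((f.continuous.mul hg').integrable_of_hasCompactSupport (hgc.fderiv_apply ℝ e).mul_left)
    ((f.continuous.mul hg.continuous).integrable_of_hasCompactSupport hgc.mul_left)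
    (fun x _ ↦ f.differentiableAt) (fun x _ ↦ hg.differentiable one_ne_zero x)
  simpa only [ContinuousLinearMap.fderiv, hfe, one_mul] using neg_eq_iff_eq_neg.1 hparts.symm

lemma integral_norm_rpow_le_mul_integral (hu : ContDiff ℝ 1 u) (hc : HasCompactSupport u)
    (hp : 1 < p) {f : E →L[ℝ] ℝ} {e : E} (hfe : f e = 1) {R : ℝ}
    (hR : ∀ x ∈ Function.support u, |f x| ≤ R) :
    ∫ x, ‖u x‖ ^ p ∂μ ≤ p * R * ∫ x, ‖u x‖ ^ (p - 1) * ‖fderiv ℝ u x e‖ ∂μ := by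
  have hp₁ : 0 < p - 1 := sub_pos.2 hp
  have hpow_continuous : Continuous fun x ↦ ‖u x‖ ^ (p - 1) :=
    hu.continuous.norm.rpow_const fun _ ↦ .inr hp₁.le
  have hbound_integrable : Integrable (fun x ↦ ‖u x‖ ^ (p - 1) * ‖fderiv ℝ u x e‖) μ :=
    (hpow_continuous.mul ((hu.continuous_fderiv one_ne_zero).clm_apply
      continuous_const).norm).integrable_of_hasCompactSupport (hc.fderiv_apply ℝ e).norm.mul_left
  have hbound (x : E) : |f x * fderiv ℝ (fun y ↦ ‖u y‖ ^ p) x e| ≤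
      p * R * (‖u x‖ ^ (p - 1) * ‖fderiv ℝ u x e‖) := by
    have hderiv := abs_fderiv_norm_rpow_apply_le (hu.differentiable one_ne_zero) hp x e
    rw [abs_mul]
    by_cases hx : u x = 0
    · simp only [hx, norm_zero, Real.zero_rpow hp₁.ne', zero_mul, mul_zero] at hderiv ⊢
      rw [le_antisymm hderiv (abs_nonneg _), mul_zero]
    · calc |f x| * |fderiv ℝ (fun y ↦ ‖u y‖ ^ p) x e|
          ≤ R * (p * (‖u x‖ ^ (p - 1) * ‖fderiv ℝ u x e‖)) :=
            mul_le_mul (hR x hx) hderiv (abs_nonneg _) ((abs_nonneg _).trans (hR x hx))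
        _ = _ := by ring
  calc ∫ x, ‖u x‖ ^ p ∂μ = -∫ x, f x * fderiv ℝ (fun y ↦ ‖u y‖ ^ p) x e ∂μ :=
        integral_norm_rpow_eq_neg_integral_mul_fderiv hu hc hp hfe
    _ ≤ ‖∫ x, f x * fderiv ℝ (fun y ↦ ‖u y‖ ^ p) x e ∂μ‖ := neg_le_abs _
    _ ≤ ∫ x, p * R * (‖u x‖ ^ (p - 1) * ‖fderiv ℝ u x e‖) ∂μ :=
        norm_integral_le_of_norm_le (hbound_integrable.const_mul _) (.of_forall hbound)
    _ = _ := integral_const_mul _ _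

lemma integral_norm_rpow_le_integral_norm_fderiv_apply_rpow (hu : ContDiff ℝ 1 u)
    (hc : HasCompactSupport u) (hp : 1 < p) {f : E →L[ℝ] ℝ} {e : E} (hfe : f e = 1) {R : ℝ}
    (hR₀ : 0 ≤ R) (hR : ∀ x ∈ Function.support u, |f x| ≤ R) :
    ∫ x, ‖u x‖ ^ p ∂μ ≤ (p * R) ^ p * ∫ x, ‖fderiv ℝ u x e‖ ^ p ∂μ := by
  have hp₀ : 0 < p := one_pos.trans hp
  have hint_u : Integrable (fun x ↦ ‖u x‖ ^ p) μ :=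
    integrable_norm_rpow_of_hasCompactSupport hu.continuous hc hp₀
  have hint_fderiv : Integrable (fun x ↦ ‖fderiv ℝ u x e‖ ^ p) μ :=
    integrable_norm_rpow_of_hasCompactSupport
      ((hu.continuous_fderiv one_ne_zero).clm_apply continuous_const) (hc.fderiv_apply ℝ e) hp₀
  have hholder : ∫ x, ‖u x‖ ^ (p - 1) * ‖fderiv ℝ u x e‖ ∂μ ≤
      (∫ x, ‖u x‖ ^ p ∂μ) ^ (1 - p⁻¹) * (∫ x, ‖fderiv ℝ u x e‖ ^ p ∂μ) ^ p⁻¹ := by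
    convert integral_rpow_mul_rpow_le (fun x ↦ by positivity) (fun x ↦ by positivity) hint_u
      hint_fderiv (sub_nonneg.2 (inv_le_one_of_one_le₀ hp.le)) (inv_nonneg.2 hp₀.le)
      (sub_add_cancel 1 p⁻¹) using 4 with x
    · rw [← Real.rpow_mul (norm_nonneg _), mul_sub, mul_inv_cancel₀ hp₀.ne', mul_one]
    · rw [Real.rpow_rpow_inv (norm_nonneg _) hp₀.ne']
  refine le_rpow_mul_of_le_mul_rpow_mul_rpow hp₀ (integral_nonneg fun x ↦ by positivity)
    (integral_nonneg fun x ↦ by positivity) (by positivity) ?_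
  exact (integral_norm_rpow_le_mul_integral hu hc hp hfe hR).trans (by gcongr)

variable (F μ) in
lemma exists_setIntegral_norm_rpow_le_setIntegral_norm_fderiv_rpow {Ω : Set E}
    {f : E →L[ℝ] ℝ} (hf : f ≠ 0) (hΩ : Bornology.IsBounded (f '' Ω)) (hp : 1 < p) :
    ∃ C, 0 ≤ C ∧ ∀ u : E → F, ContDiff ℝ 1 u → HasCompactSupport u → tsupport u ⊆ Ω →
      ∫ x in Ω, ‖u x‖ ^ p ∂μ ≤ C * ∫ x in Ω, ‖fderiv ℝ u x‖ ^ p ∂μ := by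
  have hp₀ : 0 < p := one_pos.trans hp
  obtain ⟨y, hy⟩ : ∃ y, f y ≠ 0 := by simpa using DFunLike.ne_iff.1 hf
  obtain ⟨R, hR₀, hR⟩ := hΩ.exists_pos_norm_le
  set e : E := (f y)⁻¹ • y with he
  have hfe : f e = 1 := by simp [he, hy]
  refine ⟨(p * R) ^ p * ‖e‖ ^ p, by positivity, fun u hu hc hsupp ↦ ?_⟩
  have hzero (x : E) (hx : x ∉ Ω) : x ∉ tsupport u := fun h ↦ hx (hsupp h)
  have hfderiv_integrable : Integrable (fun x ↦ ‖fderiv ℝ u x‖ ^ p) μ :=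
    integrable_norm_rpow_of_hasCompactSupport (hu.continuous_fderiv one_ne_zero) (hc.fderiv ℝ) hp₀
  rw [setIntegral_eq_integral_of_forall_compl_eq_zero fun x hx ↦ by
      simp [image_eq_zero_of_notMem_tsupport (hzero x hx), hp₀.ne'],
    setIntegral_eq_integral_of_forall_compl_eq_zero fun x hx ↦ by
      simp [fderiv_of_notMem_tsupport ℝ (hzero x hx), hp₀.ne'], mul_assoc]
  refine (integral_norm_rpow_le_integral_norm_fderiv_apply_rpow hu hc hp hfe hR₀.le
    fun x hx ↦ hR (f x) ⟨x, hsupp (subset_tsupport u hx), rfl⟩).trans ?_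
  rw [← integral_const_mul (‖e‖ ^ p)]
  gcongr (p * R) ^ p * ?_
  refine integral_mono_of_nonneg (.of_forall fun x ↦ by positivity)
    (hfderiv_integrable.const_mul _) (.of_forall fun x ↦ ?_)
  dsimp only
  rw [← Real.mul_rpow (norm_nonneg _) (norm_nonneg _), mul_comm]
  gcongr
  exact (fderiv ℝ u x).le_opNorm e

end Poincare

lemma locallyIntegrableOn_of_ae_nonneg_of_ae_le {X : Type*} [TopologicalSpace X]
    [MeasurableSpace X] [OpensMeasurableSpace X] {μ : Measure X} [IsLocallyFiniteMeasure μ]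
    {Ω : Set X} {w : X → ℝ} {C : ℝ} (hw : AEStronglyMeasurable w (μ.restrict Ω))
    (hwC : ∀ᵐ x ∂μ.restrict Ω, 0 ≤ w x ∧ w x ≤ C) : LocallyIntegrableOn w Ω μ := by
  refine locallyIntegrableOn_of_locallyIntegrable_restrict
    ((memLp_top_of_bound hw C ?_).locallyIntegrable le_top)
  filter_upwards [hwC] with x hx
  rw [Real.norm_of_nonneg hx.1]
  exact hx.2

section RayleighQuotient

open scoped ContDiff

variable {E : Type*} [NormedAddCommGroup E] [NormedSpace ℝ E] [MeasurableSpace E]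

/-- The nonlinear generalized Rayleigh quotient `Υ(u)`. The domain enters through the measure `ν`,
the restriction of a Haar measure to `Ω`, and the size of the gradient is the operator norm of the
Fréchet derivative. The quotient is `0` where its denominator vanishes. -/
noncomputable def rayleighQuotient (ν : Measure E) (a b : E → ℝ) (p q γ : ℝ) (u : E → ℝ) : ℝ :=
  (∫ x, a x * |u x| ^ q ∂ν) ^ ((γ - p) / (γ - q)) /
    ((∫ x, ‖fderiv ℝ u x‖ ^ p ∂ν) * (∫ x, b x * |u x| ^ γ ∂ν) ^ ((q - p) / (γ - q)))

/-- The admissible set of the Rayleigh quotient, with `W₀^{1,p}(Ω)` represented by its dense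
subspace of smooth functions compactly supported in `Ω`. -/
def admissibleFunctions (μ : Measure E) (Ω : Set E) (a : E → ℝ) (p q : ℝ) : Set (E → ℝ) :=
  {u | ContDiff ℝ ∞ u ∧ HasCompactSupport u ∧ tsupport u ⊆ Ω ∧
    0 < ∫ x in Ω, a x * |u x| ^ q ∂μ ∧ 0 < ∫ x in Ω, ‖fderiv ℝ u x‖ ^ p ∂μ}

/-- The values of the Rayleigh quotient on its admissible set, whose supremum is the extremal
value. -/
def rayleighValues (μ : Measure E) (Ω : Set E) (a b : E → ℝ) (p q γ : ℝ) : Set ℝ :=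
  rayleighQuotient (μ.restrict Ω) a b p q γ '' admissibleFunctions μ Ω a p q

variable {μ : Measure E} {Ω : Set E} {a b : E → ℝ} {p q γ A σ : ℝ}

lemma rayleighQuotient_denominator_nonneg (hb : ∀ᵐ x ∂μ, 0 ≤ b x) (u : E → ℝ) :
    0 ≤ (∫ x, ‖fderiv ℝ u x‖ ^ p ∂μ) * (∫ x, b x * |u x| ^ γ ∂μ) ^ ((q - p) / (γ - q)) :=
  mul_nonneg (integral_nonneg fun x ↦ by positivity) (Real.rpow_nonneg
    (integral_nonneg_of_ae (ae_nonneg_mul_rpow hb (fun x ↦ abs_nonneg (u x)) γ)) _)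

variable [FiniteDimensional ℝ E] [BorelSpace E]

lemma exists_contDiff_setIntegral_mul_abs_rpow_pos (hΩ : IsOpen Ω)
    (ha : LocallyIntegrableOn a Ω μ) (ha₀ : ∀ᵐ x ∂μ.restrict Ω, 0 ≤ a x)
    (hane : ¬ a =ᵐ[μ.restrict Ω] 0) (hq : 0 < q) :
    ∃ u : E → ℝ, ContDiff ℝ ∞ u ∧ HasCompactSupport u ∧ tsupport u ⊆ Ω ∧
      0 < ∫ x in Ω, a x * |u x| ^ q ∂μ := by
  obtain ⟨u, hu, hc, hsupp, hne⟩ : ∃ u : E → ℝ, ContDiff ℝ ∞ u ∧ HasCompactSupport u ∧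
      tsupport u ⊆ Ω ∧ ∫ x, u x • a x ∂μ ≠ 0 := by
    by_contra! hzero
    exact hane ((ae_restrict_iff' hΩ.measurableSet).2
      (hΩ.ae_eq_zero_of_integral_contDiff_smul_eq_zero ha hzero))
  have hau₀ : 0 ≤ᵐ[μ.restrict Ω] fun x ↦ a x * |u x| ^ q :=
    ae_nonneg_mul_rpow ha₀ (fun x ↦ abs_nonneg (u x)) q
  refine ⟨u, hu, hc, hsupp, (integral_nonneg_of_ae hau₀).lt_of_ne' fun hzero ↦ hne ?_⟩
  rw [setIntegral_eq_zero_iff_of_nonneg_ae hau₀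
    (integrableOn_mul_norm_rpow_of_tsupport_subset ha hu.continuous hc hsupp hq)] at hzero
  rw [← setIntegral_eq_integral_of_forall_compl_eq_zero (s := Ω) fun x hx ↦ by
    simp [image_eq_zero_of_notMem_tsupport fun h ↦ hx (hsupp h)]]
  refine integral_eq_zero_of_ae ?_
  filter_upwards [hzero] with x hx
  rcases mul_eq_zero.1 hx with hax | hux
  · simp [hax]
  · simp [abs_eq_zero.1 ((Real.rpow_eq_zero (abs_nonneg _) hq.ne').1 hux)]

variable [μ.IsAddHaarMeasure] {f : E →L[ℝ] ℝ}

lemma exists_rpow_setIntegral_mul_abs_rpow_le (hp : 1 < p) (hpq : p ≤ q) (hqγ : q < γ)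
    (hσ : 0 < σ) (hf : f ≠ 0) (hΩ : Bornology.IsBounded (f '' Ω))
    (ha : ∀ᵐ x ∂μ.restrict Ω, 0 ≤ a x ∧ a x ≤ A) (hbint : LocallyIntegrableOn b Ω μ)
    (hb : ∀ᵐ x ∂μ.restrict Ω, σ ≤ b x) :
    ∃ C, 0 ≤ C ∧ ∀ u : E → ℝ, ContDiff ℝ 1 u → HasCompactSupport u → tsupport u ⊆ Ω →
      (∫ x in Ω, a x * |u x| ^ q ∂μ) ^ ((γ - p) / (γ - q)) ≤
        C * ((∫ x in Ω, ‖fderiv ℝ u x‖ ^ p ∂μ) *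
          (∫ x in Ω, b x * |u x| ^ γ ∂μ) ^ ((q - p) / (γ - q))) := by
  have hp₀ : 0 < p := one_pos.trans hp
  have hγ₀ : 0 < γ := hp₀.trans (hpq.trans_lt hqγ)
  obtain ⟨C, hC, hpoincare⟩ :=
    exists_setIntegral_norm_rpow_le_setIntegral_norm_fderiv_rpow ℝ μ hf hΩ hp
  refine ⟨|A| ^ ((γ - p) / (γ - q)) * (σ⁻¹) ^ ((q - p) / (γ - q)) * C, by positivity,
    fun u hu hc hsupp ↦ ?_⟩
  have hbu₀ : 0 ≤ ∫ x in Ω, b x * |u x| ^ γ ∂μ := integral_nonneg_of_ae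
    (ae_nonneg_mul_rpow (hb.mono fun _ hx ↦ hσ.le.trans hx) (fun x ↦ abs_nonneg (u x)) γ)
  refine (rpow_integral_mul_rpow_le_of_ae_le hp₀ hpq hqγ hσ ha hb (fun x ↦ abs_nonneg (u x))
    (integrable_norm_rpow_of_hasCompactSupport hu.continuous hc hp₀).restrict
    (integrable_norm_rpow_of_hasCompactSupport hu.continuous hc hγ₀).restrict
    (integrableOn_mul_norm_rpow_of_tsupport_subset hbint hu.continuous hc hsupp hγ₀)).trans ?_
  rw [mul_assoc _ C, ← mul_assoc C]
  gcongr
  exact hpoincare u hu hc hsupp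

theorem stmt_14_general (hp : 1 < p) (hpq : p ≤ q) (hqγ : q < γ) (hσ : 0 < σ) (hΩ : IsOpen Ω)
    (hf : f ≠ 0) (hΩf : Bornology.IsBounded (f '' Ω))
    (hameas : AEStronglyMeasurable a (μ.restrict Ω))
    (ha : ∀ᵐ x ∂μ.restrict Ω, 0 ≤ a x ∧ a x ≤ A) (hane : ¬ a =ᵐ[μ.restrict Ω] 0)
    (hbint : LocallyIntegrableOn b Ω μ) (hb : ∀ᵐ x ∂μ.restrict Ω, σ ≤ b x) :
    (rayleighValues μ Ω a b p q γ).Nonempty ∧ BddAbove (rayleighValues μ Ω a b p q γ) ∧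
      0 < sSup (rayleighValues μ Ω a b p q γ) := by
  obtain ⟨C, hC, hbound⟩ :=
    exists_rpow_setIntegral_mul_abs_rpow_le hp hpq hqγ hσ hf hΩf ha hbint hb
  have hb₀ : ∀ᵐ x ∂μ.restrict Ω, 0 ≤ b x := hb.mono fun _ hx ↦ hσ.le.trans hx
  have hbdd : BddAbove (rayleighValues μ Ω a b p q γ) := by
    refine ⟨C, ?_⟩
    rintro _ ⟨u, ⟨hu, hc, hsupp, -, -⟩, rfl⟩
    exact div_le_of_le_mul₀ (rayleighQuotient_denominator_nonneg hb₀ u) hC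
      (hbound u (hu.of_le (by simp)) hc hsupp)
  obtain ⟨u, hu, hc, hsupp, hau⟩ := exists_contDiff_setIntegral_mul_abs_rpow_pos hΩ
    (locallyIntegrableOn_of_ae_nonneg_of_ae_le hameas ha) (ha.mono fun x hx ↦ hx.1) hane
    ((one_pos.trans hp).trans_le hpq)
  have hnum := Real.rpow_pos_of_pos hau ((γ - p) / (γ - q))
  have hden := pos_of_mul_pos_right (hnum.trans_le (hbound u (hu.of_le (by simp)) hc hsupp)) hC
  have hadm : u ∈ admissibleFunctions μ Ω a p q := ⟨hu, hc, hsupp, hau,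
    (integral_nonneg fun x ↦ by positivity).lt_of_ne' (left_ne_zero_of_mul hden.ne')⟩
  have hmem : rayleighQuotient (μ.restrict Ω) a b p q γ u ∈ rayleighValues μ Ω a b p q γ :=
    Set.mem_image_of_mem _ hadm
  exact ⟨⟨_, hmem⟩, hbdd, (div_pos hnum hden).trans_le (le_csSup hbdd hmem)⟩

end RayleighQuotient

lemma norm_gradient_eq_norm_fderiv {H : Type*} [NormedAddCommGroup H] [InnerProductSpace ℝ H]
    [CompleteSpace H] (u : H → ℝ) (x : H) : ‖gradient u x‖ = ‖fderiv ℝ u x‖ :=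
  LinearIsometryEquiv.norm_map _ _

/-- The nonlinear generalized Rayleigh quotient
`Υ(u) = (∫a|u|^q)^{(γ-p)/(γ-q)} / (∫‖∇u‖^p · (∫b|u|^γ)^{(q-p)/(γ-q)})`
has a finite positive supremum over the admissible set
`D = {u ∈ W₀^{1,p}(Ω) \ {0} : ∫a|u|^q > 0}` (here represented by smooth
compactly supported functions on `Ω`, which are dense in `W₀^{1,p}(Ω)`). -/
theorem stmt_14 {N : ℕ} (hN : 1 ≤ N) (p q γ σb : ℝ)
    (hp : 1 < p) (hpq : p < q) (hqγ : q < γ) (hσb : 0 < σb)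
    (hsub : p < N → γ < p * N / (N - p))
    (Ω : Set (EuclideanSpace ℝ (Fin N))) (hΩop : IsOpen Ω)
    (hΩbdd : Bornology.IsBounded Ω) (hΩne : Ω.Nonempty)
    (a b : EuclideanSpace ℝ (Fin N) → ℝ) (ahat bhat : ℝ)
    (hameas : Measurable a) (hbmeas : Measurable b)
    (ha : ∀ᵐ x ∂(volume.restrict Ω), 0 ≤ a x ∧ a x ≤ ahat)
    (hane : ¬ (a =ᵐ[volume.restrict Ω] 0))
    (hb : ∀ᵐ x ∂(volume.restrict Ω), σb ≤ b x ∧ b x ≤ bhat)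
    (S : Set ℝ)
    (hS : S = {r : ℝ | ∃ u : EuclideanSpace ℝ (Fin N) → ℝ,
      ContDiff ℝ (⊤ : ℕ∞) u ∧ HasCompactSupport u ∧ tsupport u ⊆ Ω ∧
      0 < ∫ x in Ω, a x * |u x| ^ q ∧
      0 < ∫ x in Ω, ‖gradient u x‖ ^ p ∧
      r = (∫ x in Ω, a x * |u x| ^ q) ^ ((γ - p) / (γ - q)) /
        ((∫ x in Ω, ‖gradient u x‖ ^ p) *
          (∫ x in Ω, b x * |u x| ^ γ) ^ ((q - p) / (γ - q)))}) :
    S.Nonempty ∧ BddAbove S ∧ 0 < sSup S := by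
  have hvalues : S = rayleighValues volume Ω a b p q γ := by
    ext r
    simp only [hS, Set.mem_ofPred_eq, norm_gradient_eq_norm_fderiv, rayleighValues, Set.mem_image,
      admissibleFunctions, rayleighQuotient, and_assoc, eq_comm]
  have : NeZero N := ⟨Nat.one_le_iff_ne_zero.1 hN⟩
  obtain ⟨f, hf⟩ := exists_ne (0 : EuclideanSpace ℝ (Fin N) →L[ℝ] ℝ)
  have hbint : LocallyIntegrableOn b Ω := locallyIntegrableOn_of_ae_nonneg_of_ae_le
    hbmeas.aestronglyMeasurable (hb.mono fun _ hx ↦ ⟨hσb.le.trans hx.1, hx.2⟩)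
  rw [hvalues]
  exact stmt_14_general hp hpq.le hqγ hσb hΩop hf (f.lipschitz.isBounded_image hΩbdd)
    hameas.aestronglyMeasurable ha hane hbint (hb.mono fun _ hx ↦ hx.1)
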